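/- arXiv:2501.18773 — 2 statements merged into one kernel-verified Lean document; each statement's English description precedes it below -/
import Mathlib

section
/- For every t ≥ 1 and every u ∈ X, the anytime online-to-batch coupling satisfies A_t·(f(x_t) − f(u)) ≤ Σ_{i=1}^t a_i⟨∇f(x_i), v_i − u⟩; that is, the suboptimality of the averaged iterate x_t is bounded by the regret of the played points v_i against the linear losses a_i⟨∇f(x_i), ·⟩, divided by A_t. -/
open scoped RealInnerProductSpace

/-!
The averaging step balances the vectors `y_{t-1} - x_t` and `v_t - x_t`: with weights `A_{t-1}` and
`a_t` they sum to zero. Hence the subgradient inequalities at `x_t`, tested at `y_{t-1}` with weight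
`A_{t-1}` and at `u` with weight `a_t`, add up to
`A_t (f x_t - f u) ≤ A_{t-1} (f y_{t-1} - f u) + a_t ⟪∇f x_t, v_t - u⟫`,
and `f y_{t-1} ≤ f x_{t-1}` makes this bound telescope.
-/

section Subgradient

/-- The linear functional `φ` is a subgradient of `f` at `x` relative to `s`: the affine function
with linear part `φ` that agrees with `f` at `x` lies below `f` on `s`. The point `x` may lie
outside `s`, and `φ` need not be continuous. -/
def IsSubgradientOn {𝕜 E : Type*} [CommRing 𝕜] [PartialOrder 𝕜] [AddCommGroup E] [Module 𝕜 E]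
    (f : E → 𝕜) (s : Set E) (x : E) (φ : Module.Dual 𝕜 E) : Prop :=
  ∀ w ∈ s, f x + φ (w - x) ≤ f w

theorem le_sub_of_convexOn_of_hasLineDerivWithinAt {E : Type*} [AddCommGroup E] [Module ℝ E]
    {s : Set E} {f : E → ℝ} {x w : E} {d : ℝ} (hf : ConvexOn ℝ s f) (hx : x ∈ s) (hw : w ∈ s)
    (hd : HasLineDerivWithinAt ℝ f d s x (w - x)) : d ≤ f w - f x := by
  have hline : (fun t : ℝ => x + t • (w - x)) = AffineMap.lineMap x w := by
    funext t
    rw [AffineMap.lineMap_apply_module', add_comm]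
  have hconv : ConvexOn ℝ (AffineMap.lineMap x w ⁻¹' s) (f ∘ AffineMap.lineMap (k := ℝ) x w) :=
    hf.comp_affineMap _
  have hderiv : HasDerivWithinAt (f ∘ AffineMap.lineMap (k := ℝ) x w) d
      (AffineMap.lineMap x w ⁻¹' s) 0 := by
    rw [← hline]
    exact hd
  simpa [slope_def_field] using
    hconv.le_slope_of_hasDerivWithinAt (y := 1) (by simpa) (by simpa) one_pos hderiv

theorem isSubgradientOn_of_hasGradientAt {E : Type*} [NormedAddCommGroup E]
    [InnerProductSpace ℝ E] [CompleteSpace E] {s : Set E} {f : E → ℝ} {g x : E}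
    (hf : ConvexOn ℝ s f) (hx : x ∈ s) (hg : HasGradientAt f g x) :
    IsSubgradientOn f s x (innerₛₗ ℝ g) := fun w hw =>
  le_sub_iff_add_le'.mp <| le_sub_of_convexOn_of_hasLineDerivWithinAt hf hx hw <|
    (hg.hasFDerivAt.hasLineDerivAt (w - x)).hasLineDerivWithinAt s

theorem IsSubgradientOn.weighted_gap_le {𝕜 E : Type*} [CommRing 𝕜] [LinearOrder 𝕜]
    [IsStrictOrderedRing 𝕜] [AddCommGroup E] [Module 𝕜 E] {f : E → 𝕜} {s : Set E} {x y u v : E}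
    {φ : Module.Dual 𝕜 E} (hφ : IsSubgradientOn f s x φ) (hy : y ∈ s) (hu : u ∈ s) {b c : 𝕜}
    (hb : 0 ≤ b) (hc : 0 ≤ c) (hx : (b + c) • x = b • y + c • v) :
    (b + c) * (f x - f u) ≤ b * (f y - f u) + c * φ (v - u) := by
  have hbalance : b * φ (y - x) + c * φ (v - x) = 0 := by
    have := congrArg φ hx
    simp only [map_add, map_smul, smul_eq_mul] at this
    simp only [map_sub]
    linear_combination -this
  have hfy : f x - f y ≤ -φ (y - x) := by linarith [hφ y hy]
  have hfu : f x - f u ≤ -φ (u - x) := by linarith [hφ u hu]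
  calc (b + c) * (f x - f u)
      = b * (f y - f u) + (b * (f x - f y) + c * (f x - f u)) := by ring
    _ ≤ b * (f y - f u) + (b * -φ (y - x) + c * -φ (u - x)) := by gcongr
    _ = b * (f y - f u) + c * φ (v - u) := by
      simp only [map_sub] at hbalance ⊢
      linear_combination -hbalance

end Subgradient

section PartialSums

variable {M : Type*} [AddCommMonoid M] {a A : ℕ → M}

theorem partialSum_succ (hA : ∀ t, A t = ∑ i ∈ Finset.Icc 1 t, a i) (t : ℕ) :
    A (t + 1) = A t + a (t + 1) := by
  rw [hA, hA, Finset.sum_Icc_succ_top (Nat.le_add_left 1 t)]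

theorem partialSum_pos [PartialOrder M] [IsOrderedCancelAddMonoid M]
    (hapos : ∀ t, 1 ≤ t → 0 < a t) (hA : ∀ t, A t = ∑ i ∈ Finset.Icc 1 t, a i)
    {t : ℕ} (ht : 1 ≤ t) : 0 < A t := by
  rw [hA]
  exact Finset.sum_pos (fun i hi => hapos i (Finset.mem_Icc.mp hi).1) (Finset.nonempty_Icc.mpr ht)

end PartialSums

section Coupling

variable {𝕜 E : Type*} [Field 𝕜] [LinearOrder 𝕜] [IsStrictOrderedRing 𝕜]
  [AddCommGroup E] [Module 𝕜 E]

theorem averaged_iterate_mem {X : Set E} (hX : Convex 𝕜 X) {a A : ℕ → 𝕜}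
    (hapos : ∀ t, 1 ≤ t → 0 < a t) (hA : ∀ t, A t = ∑ i ∈ Finset.Icc 1 t, a i)
    {v x y : ℕ → E} (hv : ∀ t, 1 ≤ t → v t ∈ X) (hy : ∀ t, 1 ≤ t → y t ∈ X) (hx1 : x 1 = v 1)
    (hxrec : ∀ t, 2 ≤ t → x t = (A (t - 1) / A t) • y (t - 1) + (a t / A t) • v t)
    {t : ℕ} (ht : 1 ≤ t) : x t ∈ X := by
  cases t, ht using Nat.le_induction with
  | base => exact hx1 ▸ hv 1 le_rfl
  | succ t ht =>
    have hAt : 0 < A t := partialSum_pos hapos hA ht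
    have hat : 0 < a (t + 1) := hapos _ (Nat.le_add_left 1 t)
    rw [hxrec (t + 1) (Nat.succ_le_succ ht), partialSum_succ hA, Nat.add_sub_cancel]
    exact convex_iff_div.mp hX (hy t ht) (hv _ (Nat.le_add_left 1 t)) hAt.le hat.le
      (add_pos hAt hat)

theorem anytime_online_to_batch_general {X : Set E} {f : E → 𝕜} {φ : ℕ → Module.Dual 𝕜 E}
    {a A : ℕ → 𝕜} (hapos : ∀ t, 1 ≤ t → 0 < a t) (hA : ∀ t, A t = ∑ i ∈ Finset.Icc 1 t, a i)
    {v x y : ℕ → E} (hφ : ∀ t, 1 ≤ t → IsSubgradientOn f X (x t) (φ t)) (hx1 : x 1 = v 1)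
    (hy : ∀ t, 1 ≤ t → y t ∈ X ∧ f (y t) ≤ f (x t))
    (hxrec : ∀ t, 2 ≤ t → x t = (A (t - 1) / A t) • y (t - 1) + (a t / A t) • v t)
    {t : ℕ} (ht : 1 ≤ t) {u : E} (hu : u ∈ X) :
    A t * (f (x t) - f u) ≤ ∑ i ∈ Finset.Icc 1 t, a i * φ i (v i - u) := by
  induction t, ht using Nat.le_induction with
  | base =>
    simpa [hA] using (hφ 1 le_rfl).weighted_gap_le hu hu le_rfl (hapos 1 le_rfl).le
      (v := v 1) (by simp [hx1])
  | succ t ht ih =>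
    obtain ⟨hyX, hyx⟩ := hy t ht
    have ht' : 1 ≤ t + 1 := Nat.le_add_left 1 t
    have hAt : 0 < A t := partialSum_pos hapos hA ht
    have hat : 0 < a (t + 1) := hapos _ ht'
    have havg : (A t + a (t + 1)) • x (t + 1) = A t • y t + a (t + 1) • v (t + 1) := by
      have hne : A t + a (t + 1) ≠ 0 := (add_pos hAt hat).ne'
      rw [hxrec (t + 1) (Nat.succ_le_succ ht), partialSum_succ hA, Nat.add_sub_cancel, smul_add,
        smul_smul, smul_smul, mul_div_cancel₀ _ hne, mul_div_cancel₀ _ hne]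
    calc A (t + 1) * (f (x (t + 1)) - f u)
        = (A t + a (t + 1)) * (f (x (t + 1)) - f u) := by rw [partialSum_succ hA]
      _ ≤ A t * (f (y t) - f u) + a (t + 1) * φ (t + 1) (v (t + 1) - u) :=
        (hφ _ ht').weighted_gap_le hyX hu hAt.le hat.le havg
      _ ≤ A t * (f (x t) - f u) + a (t + 1) * φ (t + 1) (v (t + 1) - u) := by gcongr
      _ ≤ (∑ i ∈ Finset.Icc 1 t, a i * φ i (v i - u))
          + a (t + 1) * φ (t + 1) (v (t + 1) - u) := by gcongr
      _ = ∑ i ∈ Finset.Icc 1 (t + 1), a i * φ i (v i - u) := by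
        rw [Finset.sum_Icc_succ_top ht']

end Coupling

/-- Anytime online-to-batch coupling: the weighted suboptimality of the averaged
iterate `x_t` is bounded by the regret of the played points `v_i` against the
linear losses `a_i⟪∇f(x_i), ·⟫`. -/
theorem anytime_online_to_batch
    {E : Type*} [NormedAddCommGroup E] [InnerProductSpace ℝ E] [FiniteDimensional ℝ E]
    (X : Set E) (hXconv : Convex ℝ X)
    (U : Set E) (hUopen : IsOpen U) (hXU : X ⊆ U)
    (f : E → ℝ) (f' : E → E)
    (hfconv : ConvexOn ℝ X f)
    (hgrad : ∀ z ∈ U, HasGradientAt f (f' z) z)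
    (a A : ℕ → ℝ) (hapos : ∀ t, 1 ≤ t → 0 < a t)
    (hA : ∀ t, A t = ∑ i ∈ Finset.Icc 1 t, a i)
    (v x y : ℕ → E) (hv : ∀ t, 1 ≤ t → v t ∈ X)
    (hx1 : x 1 = v 1)
    (hy : ∀ t, 1 ≤ t → y t ∈ X ∧ f (y t) ≤ f (x t))
    (hxrec : ∀ t, 2 ≤ t →
      x t = (A (t - 1) / A t) • y (t - 1) + (a t / A t) • v t) :
    ∀ t, 1 ≤ t → ∀ u ∈ X,
      A t * (f (x t) - f u) ≤ ∑ i ∈ Finset.Icc 1 t, a i * ⟪f' (x i), v i - u⟫ := by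
  have hxX (t : ℕ) (ht : 1 ≤ t) : x t ∈ X :=
    averaged_iterate_mem hXconv hapos hA hv (fun i hi => (hy i hi).1) hx1 hxrec ht
  exact fun t ht u hu => anytime_online_to_batch_general hapos hA
    (fun i hi => isSubgradientOn_of_hasGradientAt hfconv (hxX i hi) (hgrad _ (hXU (hxX i hi))))
    hx1 hy hxrec ht hu
end

section
/- Suppose f satisfies the (M,1)-strong growth property along the iterates: D_f(x_{t+1}, x_t) ≤ (1/(2M))·⟨∇f(x_t), x_t − v_t⟩ for all t, where D_f(y, x) := f(y) − f(x) − ⟨∇f(x), y − x⟩. Then for every t ≥ 1 the primal-dual gap contracts linearly: A_t G_t ≤ A_{t−1} G_{t−1}, i.e., G_t ≤ (1 − 1/(2M))·G_{t−1}. -/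
open scoped RealInnerProductSpace

/-!
Appending round `t` changes the weighted gap by
`A_t G_t - A_{t-1} G_{t-1} = A_t (f(x_{t+1}) - f(x_t)) - a_t ⟨∇f(x_t), v_t - x_t⟩`.
A step of length `γ_t` changes the linear model of `f` at `x_t` by `γ_t ⟨∇f(x_t), v_t - x_t⟩`, and
strong growth lets the curvature of `f` destroy at most half of this decrease, so `f` itself changes
by at most `(γ_t / 2) ⟨∇f(x_t), v_t - x_t⟩`. The coupling `γ_t = 2 a_t / A_t` makes
`A_t γ_t / 2 = a_t`, and the right-hand side above is nonpositive.
-/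

section PrimalDualGap

variable {𝕜 : Type*} [Field 𝕜]

/-- The total weight `A_t = a_0 + ⋯ + a_t` of the rounds up to and including `t`. -/
def cumulativeWeight (a : ℕ → 𝕜) (t : ℕ) : 𝕜 :=
  ∑ ℓ ∈ Finset.range (t + 1), a ℓ

/-- The primal-dual gap `G_t` between the objective value `y (t + 1)` reached after round `t` and
the average of the minima `m 0, …, m t` of the linear models, weighted by `a`. In Frank-Wolfe
`y t = f(x_t)` and `m t = f(x_t) + ⟨∇f(x_t), v_t - x_t⟩`, so that the average is the lower bound
`L_t`. -/
def primalDualGap (a y m : ℕ → 𝕜) (t : ℕ) : 𝕜 :=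
  y (t + 1) - (Finset.range (t + 1)).centerMass a m

theorem cumulativeWeight_succ (a : ℕ → 𝕜) (t : ℕ) :
    cumulativeWeight a (t + 1) = cumulativeWeight a t + a (t + 1) :=
  Finset.sum_range_succ a (t + 1)

theorem cumulativeWeight_mul_primalDualGap {a : ℕ → 𝕜} (y m : ℕ → 𝕜) {t : ℕ}
    (ht : cumulativeWeight a t ≠ 0) :
    cumulativeWeight a t * primalDualGap a y m t =
      cumulativeWeight a t * y (t + 1) - ∑ ℓ ∈ Finset.range (t + 1), a ℓ * m ℓ := by
  have hcenter : cumulativeWeight a t * (Finset.range (t + 1)).centerMass a m =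
      ∑ ℓ ∈ Finset.range (t + 1), a ℓ * m ℓ := mul_inv_cancel_left₀ ht _
  rw [primalDualGap, mul_sub, hcenter]

theorem cumulativeWeight_mul_primalDualGap_succ_sub {a : ℕ → 𝕜} (y m : ℕ → 𝕜) {t : ℕ}
    (ht : cumulativeWeight a t ≠ 0) (ht' : cumulativeWeight a (t + 1) ≠ 0) :
    cumulativeWeight a (t + 1) * primalDualGap a y m (t + 1) -
        cumulativeWeight a t * primalDualGap a y m t =
      cumulativeWeight a (t + 1) * (y (t + 2) - y (t + 1)) -
        a (t + 1) * (m (t + 1) - y (t + 1)) := by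
  rw [cumulativeWeight_mul_primalDualGap y m ht, cumulativeWeight_mul_primalDualGap y m ht',
    Finset.sum_range_succ _ (t + 1), cumulativeWeight_succ]
  ring

variable [LinearOrder 𝕜] [IsStrictOrderedRing 𝕜]

theorem cumulativeWeight_pos {a : ℕ → 𝕜} (ha : ∀ t, 0 < a t) (t : ℕ) :
    0 < cumulativeWeight a t :=
  Finset.sum_pos (fun ℓ _ => ha ℓ) Finset.nonempty_range_add_one

theorem cumulativeWeight_mul_primalDualGap_succ_le {a y m : ℕ → 𝕜} {t : ℕ}
    (ht : cumulativeWeight a t ≠ 0) (ht' : 0 < cumulativeWeight a (t + 1))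
    (hdescent : y (t + 2) - y (t + 1) ≤
      a (t + 1) / cumulativeWeight a (t + 1) * (m (t + 1) - y (t + 1))) :
    cumulativeWeight a (t + 1) * primalDualGap a y m (t + 1) ≤
      cumulativeWeight a t * primalDualGap a y m t := by
  rw [← sub_nonpos, cumulativeWeight_mul_primalDualGap_succ_sub y m ht ht'.ne', sub_nonpos]
  calc cumulativeWeight a (t + 1) * (y (t + 2) - y (t + 1))
      ≤ cumulativeWeight a (t + 1) *
          (a (t + 1) / cumulativeWeight a (t + 1) * (m (t + 1) - y (t + 1))) := by gcongr
    _ = a (t + 1) * (m (t + 1) - y (t + 1)) := by rw [← mul_assoc, mul_div_cancel₀ _ ht'.ne']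

theorem le_one_sub_div_mul_of_cumulativeWeight_mul_le {a : ℕ → 𝕜} {t : ℕ} {g g' : 𝕜}
    (ht' : 0 < cumulativeWeight a (t + 1))
    (h : cumulativeWeight a (t + 1) * g' ≤ cumulativeWeight a t * g) :
    g' ≤ (1 - a (t + 1) / cumulativeWeight a (t + 1)) * g := by
  have hratio : 1 - a (t + 1) / cumulativeWeight a (t + 1) =
      cumulativeWeight a t / cumulativeWeight a (t + 1) := by
    rw [one_sub_div ht'.ne', cumulativeWeight_succ, add_sub_cancel_right]
  rwa [hratio, div_mul_eq_mul_div, le_div_iff₀' ht']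

end PrimalDualGap

section FrankWolfe

theorem frankWolfe_iterate_mem {𝕜 E : Type*} [Ring 𝕜] [PartialOrder 𝕜] [IsOrderedAddMonoid 𝕜]
    [AddCommMonoid E] [SMul 𝕜 E] {X : Set E} (hX : Convex 𝕜 X) {γ : ℕ → 𝕜}
    (hγ₀ : ∀ t, 0 ≤ γ t) (hγ₁ : ∀ t, γ t ≤ 1) {x v : ℕ → E} (hx₀ : x 0 ∈ X) (hv : ∀ t, v t ∈ X)
    (hx : ∀ t, x (t + 1) = (1 - γ t) • x t + γ t • v t) (t : ℕ) : x t ∈ X := by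
  induction t with
  | zero => exact hx₀
  | succ t ih =>
    rw [hx t]
    exact hX ih (hv t) (sub_nonneg.2 (hγ₁ t)) (hγ₀ t) (sub_add_cancel 1 (γ t))

variable {E : Type*} [NormedAddCommGroup E] [NormedSpace ℝ E]

/-- The Bregman divergence `D_f(y, x)`: the error at `y` of the linear model of `f` at `x`. The
derivative is `fderiv ℝ f x`, which is `0` where `f` is not differentiable. -/
noncomputable def bregmanDivergence (f : E → ℝ) (y x : E) : ℝ :=
  f y - f x - fderiv ℝ f x (y - x)

theorem bregmanDivergence_eq_of_hasFDerivAt {f : E → ℝ} {p : StrongDual ℝ E} {x : E}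
    (hf : HasFDerivAt f p x) (y : E) : bregmanDivergence f y x = f y - f x - p (y - x) := by
  rw [bregmanDivergence, hf.fderiv]

theorem sub_le_of_bregmanDivergence_le {f : E → ℝ} {p : StrongDual ℝ E} {x v y : E} {γ : ℝ}
    (hf : HasFDerivAt f p x) (hy : y = (1 - γ) • x + γ • v)
    (hgrowth : bregmanDivergence f y x ≤ γ / 2 * p (x - v)) :
    f y - f x ≤ γ / 2 * p (v - x) := by
  have hstep : y - x = γ • (v - x) := by rw [hy]; module
  have hmodel : p (y - x) = γ * p (v - x) := by rw [hstep, map_smul, smul_eq_mul]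
  have hneg : p (x - v) = -p (v - x) := by rw [← map_neg, neg_sub]
  rw [bregmanDivergence_eq_of_hasFDerivAt hf, hmodel, hneg] at hgrowth
  linarith

theorem fw_strong_growth_linear_contraction_general
    {f : E → ℝ} {x v : ℕ → E} {p : ℕ → StrongDual ℝ E} {a γ : ℕ → ℝ}
    (hf : ∀ t, HasFDerivAt f (p t) (x t))
    (ha : ∀ t, 0 < a t)
    (hγ : ∀ t, 1 ≤ t → a t / cumulativeWeight a t = γ t / 2)
    (hx : ∀ t, x (t + 1) = (1 - γ t) • x t + γ t • v t)
    (hgrowth : ∀ t, bregmanDivergence f (x (t + 1)) (x t) ≤ γ t / 2 * p t (x t - v t))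
    {G : ℕ → ℝ}
    (hG : G = primalDualGap a (fun t => f (x t)) fun t => f (x t) + p t (v t - x t)) :
    ∀ t, 1 ≤ t →
      cumulativeWeight a t * G t ≤ cumulativeWeight a (t - 1) * G (t - 1) ∧
        G t ≤ (1 - γ t / 2) * G (t - 1) := by
  rintro (_ | t) ht
  · contradiction
  have hpos := cumulativeWeight_pos ha
  have hdescent := sub_le_of_bregmanDivergence_le (hf (t + 1)) (hx (t + 1)) (hgrowth (t + 1))
  have hgap : cumulativeWeight a (t + 1) * G (t + 1) ≤ cumulativeWeight a t * G t := by
    rw [hG]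
    refine cumulativeWeight_mul_primalDualGap_succ_le (hpos t).ne' (hpos (t + 1)) ?_
    rwa [hγ (t + 1) ht, add_sub_cancel_left]
  refine ⟨hgap, ?_⟩
  rw [← hγ (t + 1) ht]
  exact le_one_sub_div_mul_of_cumulativeWeight_mul_le (hpos (t + 1)) hgap

end FrankWolfe

/-- Frank-Wolfe with modified linear coupling `γ_t = 2a_t/A_t = 1/M` under the
`(M,1)`-strong growth property: the primal-dual gap contracts linearly,
`A_t G_t ≤ A_{t-1} G_{t-1}`, i.e. `G_t ≤ (1 - 1/(2M)) G_{t-1}`. -/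
theorem fw_strong_growth_linear_contraction
    {E : Type*} [NormedAddCommGroup E] [InnerProductSpace ℝ E] [FiniteDimensional ℝ E]
    (X : Set E) (hXcompact : IsCompact X) (hXconv : Convex ℝ X)
    (U : Set E) (hUopen : IsOpen U) (hXU : X ⊆ U)
    (f : E → ℝ) (f' : E → E)
    (hfconv : ConvexOn ℝ X f)
    (hgrad : ∀ z ∈ U, HasGradientAt f (f' z) z)
    (M : ℝ) (hM : 1 ≤ M)
    (a A : ℕ → ℝ) (hapos : ∀ t, 0 < a t)
    (hA : ∀ t, A t = ∑ ℓ ∈ Finset.range (t + 1), a ℓ)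
    (hratio : ∀ t, 1 ≤ t → a t / A t = 1 / (2 * M))
    (x v : ℕ → E) (hx0 : x 0 ∈ X)
    (hv : ∀ t, v t ∈ X ∧ ∀ w ∈ X, ⟪f' (x t), v t⟫ ≤ ⟪f' (x t), w⟫)
    (hxrec : ∀ t, x (t + 1) = (1 - 1 / M) • x t + (1 / M) • v t)
    (hgrowth : ∀ t,
      f (x (t + 1)) - f (x t) - ⟪f' (x t), x (t + 1) - x t⟫
        ≤ (1 / (2 * M)) * ⟪f' (x t), x t - v t⟫)
    (G : ℕ → ℝ)
    (hG : ∀ t, G t = f (x (t + 1)) -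
      (1 / A t) * ∑ ℓ ∈ Finset.range (t + 1),
        a ℓ * (f (x ℓ) + ⟪f' (x ℓ), v ℓ - x ℓ⟫)) :
    ∀ t, 1 ≤ t →
      A t * G t ≤ A (t - 1) * G (t - 1) ∧ G t ≤ (1 - 1 / (2 * M)) * G (t - 1) := by
  obtain rfl : A = cumulativeWeight a := funext hA
  have hM₁ : 1 / M ≤ 1 := (div_le_one (by positivity)).2 hM
  have hmem : ∀ t, x t ∈ X :=
    frankWolfe_iterate_mem hXconv (fun _ => by positivity) (fun _ => hM₁) hx0 (fun t => (hv t).1)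
      hxrec
  have hf : ∀ t, HasFDerivAt f (InnerProductSpace.toDual ℝ E (f' (x t))) (x t) :=
    fun t => hgrad _ (hXU (hmem t))
  have hhalf : 1 / (2 * M) = 1 / M / 2 := by rw [div_div, mul_comm]
  simp only [hhalf] at hratio hgrowth ⊢
  refine fw_strong_growth_linear_contraction_general (γ := fun _ => 1 / M) hf hapos hratio hxrec
    (fun t => (bregmanDivergence_eq_of_hasFDerivAt (hf t) _).trans_le (hgrowth t))
    (funext fun t => ?_)
  rw [hG t, one_div]
  rfl
end
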